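/- arXiv:2604.08067 — 3 statements merged into one kernel-verified Lean document; each statement's English description precedes it below -/
import Mathlib

section
/- Let D be a symmetric positive semidefinite real n×n matrix, let ξ, u ∈ ℝⁿ and t > 0, and define d = −Dξ and s = t·d. If −⟨d, u⟩ − ⟨ξ, s⟩ < 0, then ⟨u, Du − s⟩ > 0. -/
open scoped RealInnerProductSpace

section

variable {𝕜 E : Type*} [RCLike 𝕜] [NormedAddCommGroup E] [InnerProductSpace 𝕜 E]

theorem re_inner_pos_of_re_inner_add_smul_nonneg {x y v : E} {t : ℝ} (ht : 0 < t)
    (hadd : 0 ≤ RCLike.re (inner 𝕜 (x + (t : 𝕜) • y) v)) (hy : RCLike.re (inner 𝕜 y v) < 0) :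
    0 < RCLike.re (inner 𝕜 x v) := by
  rw [inner_add_left, inner_smul_left, RCLike.conj_ofReal, map_add, RCLike.re_ofReal_mul] at hadd
  linarith [mul_neg_of_pos_of_neg ht hy]

theorem stmt_3_general {T : E →ₗ[𝕜] E} (hT : T.IsPositive) (ξ u : E) (t : ℝ) (ht : 0 < t)
    (d s : E) (hd : d = -T ξ) (hs : s = (t : 𝕜) • d)
    (hcond : RCLike.re (-inner 𝕜 d u - inner 𝕜 ξ s) < 0) :
    0 < RCLike.re (inner 𝕜 u (T u - s)) := by
  -- Both `hcond` and the goal are pairings with `T (u + t • ξ)`, against `ξ` and `u` respectively.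
  have map_add_smul : T (u + (t : 𝕜) • ξ) = T u - s := by
    rw [map_add, map_smul, hs, hd, smul_neg, sub_neg_eq_add]
  have cond_eq : -inner 𝕜 d u - inner 𝕜 ξ s = inner 𝕜 ξ (T u - s) := by
    rw [hd, inner_neg_left, neg_neg, hT.isSymmetric ξ u, inner_sub_right]
  have nonneg : 0 ≤ RCLike.re (inner 𝕜 (u + (t : 𝕜) • ξ) (T u - s)) :=
    map_add_smul ▸ hT.re_inner_nonneg_right (u + (t : 𝕜) • ξ)
  exact re_inner_pos_of_re_inner_add_smul_nonneg ht nonneg (cond_eq ▸ hcond)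

end

theorem stmt_3 {n : ℕ} (D : Matrix (Fin n) (Fin n) ℝ) (hD : D.PosSemidef)
    (ξ u : EuclideanSpace ℝ (Fin n)) (t : ℝ) (ht : 0 < t)
    (d s : EuclideanSpace ℝ (Fin n))
    (hd : d = -(Matrix.toEuclideanLin D ξ)) (hs : s = t • d)
    (hcond : -⟪d, u⟫ - ⟪ξ, s⟫ < 0) :
    0 < ⟪u, Matrix.toEuclideanLin D u - s⟫ :=
  stmt_3_general (Matrix.isPositive_toEuclideanLin_iff.mpr hD) ξ u t ht d s hd hs hcond
end

section
/- Let m ≤ k be positive integers, γ > 0, x ∈ ℝⁿ, and for each j = m, …, k let y_j ∈ ℝⁿ, ξ_j ∈ ℝⁿ and β_j ∈ ℝ satisfy β_j ≥ (γ/2)‖y_j − x‖², with y_m = x and β_m = 0. Suppose the aggregate sequences (ξ̃_i, β̃_i), i = m, …, k, satisfy ξ̃_m = ξ_m, β̃_m = 0, and for each i ∈ {m, …, k − 1} there exist λ₁ⁱ, λ₂ⁱ, λ₃ⁱ ≥ 0 with λ₁ⁱ + λ₂ⁱ + λ₃ⁱ = 1 such that ξ̃_{i+1} = λ₁ⁱ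 ξ_m + λ₂ⁱ ξ_{i+1} + λ₃ⁱ ξ̃_i and β̃_{i+1} = λ₂ⁱ β_{i+1} + λ₃ⁱ β̃_i. Then there exist numbers λ^{k,j} ≥ 0, j = m, …, k, with Σ_{j=m}^{k} λ^{k,j} = 1 such that ξ̃_k = Σ_{j=m}^{k} λ^{k,j} ξ_j, β̃_k = Σ_{j=m}^{k} λ^{k,j} β_j, and, setting σ̃_k = Σ_{j=m}^{k} λ^{k,j} ‖y_j − x‖, one has β̃_k ≥ (γ/2) σ̃_k². -/
open scoped RealInnerProductSpace

/-!
Since `β m = 0`, the aggregation step acts on the pairs `(ξ j, β j)`: each aggregate pair is a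
convex combination of the pairs of indices `m` and `i + 1` and of the previous aggregate pair. By
induction the final aggregate pair lies in the convex hull of the `(ξ j, β j)`, so a single family
of weights serves both components. The lower bound is then Jensen's inequality for
`r ↦ γ / 2 * r ^ 2`.
-/

section Convexity

variable {𝕜 E ι : Type*} [Field 𝕜] [LinearOrder 𝕜] [IsStrictOrderedRing 𝕜]
  [AddCommGroup E] [Module 𝕜 E]

theorem exists_weights_of_mem_convexHull_image {t : Finset ι} {p : ι → E} {z : E}
    (hz : z ∈ convexHull 𝕜 (p '' t)) :
    ∃ w : ι → 𝕜, (∀ i ∈ t, 0 ≤ w i) ∧ ∑ i ∈ t, w i = 1 ∧ ∑ i ∈ t, w i • p i = z := by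
  classical
  let weightedSum : (ι → 𝕜) →ₗ[𝕜] E := ∑ i ∈ t, (LinearMap.proj i).smulRight (p i)
  let weights : Set (ι → 𝕜) := {w | (∀ i ∈ t, 0 ≤ w i) ∧ ∑ i ∈ t, w i = 1}
  have convex_weights : Convex 𝕜 weights := by
    rintro v ⟨hv₀, hv₁⟩ w ⟨hw₀, hw₁⟩ a b ha hb hab
    refine ⟨fun i hi ↦ add_nonneg (mul_nonneg ha (hv₀ i hi)) (mul_nonneg hb (hw₀ i hi)), ?_⟩
    simp [Finset.sum_add_distrib, ← Finset.mul_sum, hv₁, hw₁, hab]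
  have image_subset : p '' t ⊆ weightedSum '' weights := by
    rintro _ ⟨i, hi, rfl⟩
    rw [Finset.mem_coe] at hi
    refine ⟨Pi.single i 1, ⟨fun j _ ↦ ?_, ?_⟩, ?_⟩
    · have single_nonneg : 0 ≤ (Pi.single i 1 : ι → 𝕜) := Pi.single_nonneg.2 zero_le_one
      exact single_nonneg j
    · simp [Finset.sum_pi_single', hi]
    · simp [weightedSum, Pi.single_apply, hi]
  obtain ⟨w, ⟨hw₀, hw₁⟩, hwz⟩ := convexHull_min image_subset (convex_weights.linear_image _) hz
  exact ⟨w, hw₀, hw₁, by simpa [weightedSum] using hwz⟩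

theorem smul_add_smul_add_smul_mem_of_convex {s : Set E} (hs : Convex 𝕜 s) {x y z : E}
    (hx : x ∈ s) (hy : y ∈ s) (hz : z ∈ s) {a b c : 𝕜} (ha : 0 ≤ a) (hb : 0 ≤ b) (hc : 0 ≤ c)
    (habc : a + b + c = 1) : a • x + b • y + c • z ∈ s := by
  have := hs.sum_mem (t := Finset.univ) (w := ![a, b, c]) (z := ![x, y, z])
    (by simp [Fin.forall_fin_succ, ha, hb, hc]) (by simpa [Fin.sum_univ_three] using habc)
    (by simp [Fin.forall_fin_succ, hx, hy, hz])
  simpa [Fin.sum_univ_three] using this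

theorem mem_of_convex_of_forall_eq_combination {s : Set E} (hs : Convex 𝕜 s) {m k : ℕ}
    (hmk : m ≤ k) {p z : ℕ → E} (hp : ∀ j, m ≤ j → j ≤ k → p j ∈ s) (hzm : z m ∈ s)
    (hz : ∀ i, m ≤ i → i < k → ∃ a b c : 𝕜, 0 ≤ a ∧ 0 ≤ b ∧ 0 ≤ c ∧ a + b + c = 1 ∧
      z (i + 1) = a • p m + b • p (i + 1) + c • z i) :
    z k ∈ s := by
  suffices ∀ i, m ≤ i → i ≤ k → z i ∈ s from this k hmk le_rfl
  intro i hmi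
  induction i, hmi using Nat.le_induction with
  | base => exact fun _ ↦ hzm
  | succ i hmi ih =>
    intro hik
    obtain ⟨a, b, c, ha, hb, hc, habc, hzi⟩ := hz i hmi hik
    rw [hzi]
    exact smul_add_smul_add_smul_mem_of_convex hs (hp m le_rfl hmk) (hp _ (by omega) hik)
      (ih (by omega)) ha hb hc habc

theorem exists_weights_of_forall_eq_combination {m k : ℕ} (hmk : m ≤ k) {p z : ℕ → E}
    (hzm : z m = p m)
    (hz : ∀ i, m ≤ i → i < k → ∃ a b c : 𝕜, 0 ≤ a ∧ 0 ≤ b ∧ 0 ≤ c ∧ a + b + c = 1 ∧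
      z (i + 1) = a • p m + b • p (i + 1) + c • z i) :
    ∃ w : ℕ → 𝕜, (∀ j ∈ Finset.Icc m k, 0 ≤ w j) ∧ ∑ j ∈ Finset.Icc m k, w j = 1 ∧
      ∑ j ∈ Finset.Icc m k, w j • p j = z k := by
  have hp : ∀ j, m ≤ j → j ≤ k → p j ∈ convexHull 𝕜 (p '' Finset.Icc m k) := fun j hmj hjk ↦
    subset_convexHull 𝕜 _ ⟨j, Finset.mem_coe.2 (Finset.mem_Icc.2 ⟨hmj, hjk⟩), rfl⟩
  exact exists_weights_of_mem_convexHull_image <|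
    mem_of_convex_of_forall_eq_combination (convex_convexHull 𝕜 _) hmk hp
      (hzm ▸ hp m le_rfl hmk) hz

theorem map_sum_le_sum_of_convexOn {s : Set E} {f : E → 𝕜} (hf : ConvexOn 𝕜 s f) {t : Finset ι}
    {w b : ι → 𝕜} {p : ι → E} (hw₀ : ∀ i ∈ t, 0 ≤ w i) (hw₁ : ∑ i ∈ t, w i = 1)
    (hp : ∀ i ∈ t, p i ∈ s) (hb : ∀ i ∈ t, f (p i) ≤ b i) :
    f (∑ i ∈ t, w i • p i) ≤ ∑ i ∈ t, w i * b i :=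
  (hf.map_sum_le hw₀ hw₁ hp).trans <|
    Finset.sum_le_sum fun i hi ↦ mul_le_mul_of_nonneg_left (hb i hi) (hw₀ i hi)

theorem convexOn_const_mul_sq {c : 𝕜} (hc : 0 ≤ c) :
    ConvexOn 𝕜 Set.univ fun r : 𝕜 ↦ c * r ^ 2 :=
  even_two.convexOn_pow.smul hc

end Convexity

theorem stmt_4_general {E F : Type*} [AddCommGroup E] [Module ℝ E] [SeminormedAddCommGroup F]
    {m k : ℕ} (hmk : m ≤ k) {γ : ℝ} (hγ : 0 ≤ γ) {x : F} {y : ℕ → F} {ξ : ℕ → E} {β : ℕ → ℝ}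
    (hβ : ∀ j, m ≤ j → j ≤ k → γ / 2 * ‖y j - x‖ ^ 2 ≤ β j) (hβm : β m = 0)
    {ξt : ℕ → E} {βt : ℕ → ℝ} (hξtm : ξt m = ξ m) (hβtm : βt m = 0)
    (hagg : ∀ i, m ≤ i → i < k →
      ∃ l₁ l₂ l₃ : ℝ, 0 ≤ l₁ ∧ 0 ≤ l₂ ∧ 0 ≤ l₃ ∧ l₁ + l₂ + l₃ = 1 ∧
        ξt (i + 1) = l₁ • ξ m + l₂ • ξ (i + 1) + l₃ • ξt i ∧
        βt (i + 1) = l₂ * β (i + 1) + l₃ * βt i) :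
    ∃ lam : ℕ → ℝ,
      (∀ j ∈ Finset.Icc m k, 0 ≤ lam j) ∧
      (∑ j ∈ Finset.Icc m k, lam j) = 1 ∧
      ξt k = ∑ j ∈ Finset.Icc m k, lam j • ξ j ∧
      βt k = ∑ j ∈ Finset.Icc m k, lam j * β j ∧
      γ / 2 * (∑ j ∈ Finset.Icc m k, lam j * ‖y j - x‖) ^ 2 ≤ βt k := by
  obtain ⟨lam, hlam₀, hlam₁, hlam⟩ := exists_weights_of_forall_eq_combination (𝕜 := ℝ) hmk
    (p := fun j ↦ (ξ j, β j)) (z := fun i ↦ (ξt i, βt i)) (by simp [hξtm, hβtm, hβm])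
    fun i hmi hik ↦ by
      obtain ⟨a, b, c, ha, hb, hc, habc, hξt, hβt⟩ := hagg i hmi hik
      exact ⟨a, b, c, ha, hb, hc, habc, by simp [hξt, hβt, hβm]⟩
  have hξtk : ξt k = ∑ j ∈ Finset.Icc m k, lam j • ξ j := by
    simpa [Prod.fst_sum] using (congrArg Prod.fst hlam).symm
  have hβtk : βt k = ∑ j ∈ Finset.Icc m k, lam j * β j := by
    simpa [Prod.snd_sum] using (congrArg Prod.snd hlam).symm
  refine ⟨lam, hlam₀, hlam₁, hξtk, hβtk, hβtk ▸ ?_⟩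
  have hγ₂ : 0 ≤ γ / 2 := by positivity
  exact map_sum_le_sum_of_convexOn (convexOn_const_mul_sq hγ₂) hlam₀ hlam₁
    (fun _ _ ↦ Set.mem_univ _) fun j hj ↦ hβ j (Finset.mem_Icc.1 hj).1 (Finset.mem_Icc.1 hj).2

theorem stmt_4 {n : ℕ} (m k : ℕ) (hm : 1 ≤ m) (hmk : m ≤ k) (γ : ℝ) (hγ : 0 < γ)
    (x : EuclideanSpace ℝ (Fin n))
    (y ξ : ℕ → EuclideanSpace ℝ (Fin n)) (β : ℕ → ℝ)
    (hβ : ∀ j, m ≤ j → j ≤ k → γ / 2 * ‖y j - x‖ ^ 2 ≤ β j)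
    (hym : y m = x) (hβm : β m = 0)
    (ξt : ℕ → EuclideanSpace ℝ (Fin n)) (βt : ℕ → ℝ)
    (hξtm : ξt m = ξ m) (hβtm : βt m = 0)
    (hagg : ∀ i, m ≤ i → i < k →
      ∃ l₁ l₂ l₃ : ℝ, 0 ≤ l₁ ∧ 0 ≤ l₂ ∧ 0 ≤ l₃ ∧ l₁ + l₂ + l₃ = 1 ∧
        ξt (i + 1) = l₁ • ξ m + l₂ • ξ (i + 1) + l₃ • ξt i ∧
        βt (i + 1) = l₂ * β (i + 1) + l₃ * βt i) :
    ∃ lam : ℕ → ℝ,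
      (∀ j ∈ Finset.Icc m k, 0 ≤ lam j) ∧
      (∑ j ∈ Finset.Icc m k, lam j) = 1 ∧
      ξt k = ∑ j ∈ Finset.Icc m k, lam j • ξ j ∧
      βt k = ∑ j ∈ Finset.Icc m k, lam j * β j ∧
      γ / 2 * (∑ j ∈ Finset.Icc m k, lam j * ‖y j - x‖) ^ 2 ≤ βt k := by
  exact stmt_4_general hmk hγ.le hβ hβm hξtm hβtm hagg
end

section
/- Let p, g ∈ ℝⁿ and let w, α, β, M, c be real numbers with α ≥ 0, β ≥ 0, M > 0, c ∈ (0, 1/2), w = ‖p‖² + 2α, β + ⟨p, g⟩ ≤ c·w, and max{‖p‖, ‖g‖, √α} ≤ M. Define Q : [0,1] → ℝ by Q(λ) = ‖λg + (1 − λ)p‖² + 2(λβ + (1 − λ)α), and set b = (1 − 2c)/(4M). Then there exists λ ∈ [0,1] such that Q(λ) ≤ w − w²·b²; equivalently, min{Q(λ) : λ ∈ [0,1]} ≤ w − w²·b². -/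
open scoped RealInnerProductSpace

/-!
Expanded around `λ = 0`, `Q` is a quadratic with value `w`, slope `2(β + ⟪p, g⟫ - ‖p‖² - α)` and
leading coefficient `‖g - p‖²`. The descent condition makes the slope at most `-(1 - 2c)w`, and the
norm bounds make the leading coefficient at most `4M²`. Minimizing the resulting quadratic upper
bound gives the step `λ = (1 - 2c)w / (8M²)` and the decrease `((1 - 2c)w)² / (16M²) = w²b²`; the
step does not exceed `1` because `w ≤ 3M²`.
-/

theorem exists_mem_Icc_sq_mul_sub_mul_le {s d : ℝ} (hd : 0 < d) (hs : 0 ≤ s) (hsd : s ≤ 2 * d) :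
    ∃ t ∈ Set.Icc (0 : ℝ) 1, t ^ 2 * d - t * s ≤ -(s ^ 2 / (4 * d)) := by
  refine ⟨s / (2 * d), ⟨by positivity, (div_le_one (by positivity)).2 hsd⟩, le_of_eq ?_⟩
  field_simp
  ring

theorem norm_sub_sq_le_four_mul_sq {E : Type*} [SeminormedAddCommGroup E] {p g : E} {M : ℝ}
    (hp : ‖p‖ ≤ M) (hg : ‖g‖ ≤ M) : ‖g - p‖ ^ 2 ≤ 4 * M ^ 2 :=
  calc ‖g - p‖ ^ 2 ≤ (M + M) ^ 2 := by gcongr; exact norm_sub_le_of_le hg hp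
    _ = 4 * M ^ 2 := by ring

section InnerProductSpace

variable {E : Type*} [SeminormedAddCommGroup E] [InnerProductSpace ℝ E]

theorem norm_smul_add_one_sub_smul_sq (p g : E) (t : ℝ) :
    ‖t • g + (1 - t) • p‖ ^ 2 =
      ‖p‖ ^ 2 + 2 * t * (⟪p, g⟫ - ‖p‖ ^ 2) + t ^ 2 * ‖g - p‖ ^ 2 := by
  have base_point : t • g + (1 - t) • p = p + t • (g - p) := by module
  rw [base_point, norm_add_sq_real, inner_smul_right, inner_sub_right,
    real_inner_self_eq_norm_sq, norm_smul, mul_pow, Real.norm_eq_abs, sq_abs]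
  ring

theorem norm_smul_add_one_sub_smul_sq_add_le {p g : E} {α β M c t : ℝ}
    (hp : ‖p‖ ≤ M) (hg : ‖g‖ ≤ M) (hβg : β + ⟪p, g⟫ ≤ c * (‖p‖ ^ 2 + 2 * α)) (ht : 0 ≤ t) :
    ‖t • g + (1 - t) • p‖ ^ 2 + 2 * (t * β + (1 - t) * α) ≤
      ‖p‖ ^ 2 + 2 * α + (t ^ 2 * (4 * M ^ 2) - t * ((1 - 2 * c) * (‖p‖ ^ 2 + 2 * α))) := by
  have slope_le : 2 * (β + ⟪p, g⟫ - ‖p‖ ^ 2 - α) ≤ -((1 - 2 * c) * (‖p‖ ^ 2 + 2 * α)) := by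
    linarith [sq_nonneg ‖p‖]
  calc ‖t • g + (1 - t) • p‖ ^ 2 + 2 * (t * β + (1 - t) * α)
      = ‖p‖ ^ 2 + 2 * α + (t ^ 2 * ‖g - p‖ ^ 2 + t * (2 * (β + ⟪p, g⟫ - ‖p‖ ^ 2 - α))) := by
        rw [norm_smul_add_one_sub_smul_sq]; ring
    _ ≤ ‖p‖ ^ 2 + 2 * α +
          (t ^ 2 * (4 * M ^ 2) + t * -((1 - 2 * c) * (‖p‖ ^ 2 + 2 * α))) := by
        gcongr; exact norm_sub_sq_le_four_mul_sq hp hg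
    _ = _ := by ring

/-- The bound `-5/6 ≤ c` reads `1 - 2c ≤ 8/3`; together with `w ≤ 3M²` it keeps the minimizing step
`(1 - 2c)w / (8M²)` inside `[0, 1]`. -/
theorem stmt_7_general (p g : E) (w α β M c : ℝ) (hα : 0 ≤ α) (hM : 0 < M)
    (hc : c ∈ Set.Icc (-(5 / 6) : ℝ) (1 / 2))
    (hw : w = ‖p‖ ^ 2 + 2 * α)
    (hβg : β + ⟪p, g⟫ ≤ c * w)
    (hbound : max (max ‖p‖ ‖g‖) (Real.sqrt α) ≤ M)
    (Q : ℝ → ℝ)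
    (hQ : ∀ lam, Q lam = ‖lam • g + (1 - lam) • p‖ ^ 2 + 2 * (lam * β + (1 - lam) * α))
    (b : ℝ) (hb : b = (1 - 2 * c) / (4 * M)) :
    ∃ lam ∈ Set.Icc (0 : ℝ) 1, Q lam ≤ w - w ^ 2 * b ^ 2 := by
  obtain ⟨⟨hp, hg⟩, hαM⟩ : (‖p‖ ≤ M ∧ ‖g‖ ≤ M) ∧ √α ≤ M := by simpa only [max_le_iff] using hbound
  have w_nonneg : 0 ≤ w := hw ▸ by positivity
  have w_le : w ≤ 3 * M ^ 2 := by
    linarith [(Real.sqrt_le_left hM.le).1 hαM, pow_le_pow_left₀ (norm_nonneg p) hp 2]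
  have slope_nonneg : 0 ≤ (1 - 2 * c) * w := mul_nonneg (by linarith [hc.2]) w_nonneg
  have slope_le : (1 - 2 * c) * w ≤ 2 * (4 * M ^ 2) :=
    calc (1 - 2 * c) * w ≤ 8 / 3 * (3 * M ^ 2) := by gcongr; linarith [hc.1]
      _ = 2 * (4 * M ^ 2) := by ring
  have decrease_eq : ((1 - 2 * c) * w) ^ 2 / (4 * (4 * M ^ 2)) = w ^ 2 * b ^ 2 := by
    rw [hb]; field_simp
  obtain ⟨t, ht, hmin⟩ :=
    exists_mem_Icc_sq_mul_sub_mul_le (d := 4 * M ^ 2) (by positivity) slope_nonneg slope_le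
  refine ⟨t, ht, ?_⟩
  subst hw
  linarith [hQ t, norm_smul_add_one_sub_smul_sq_add_le hp hg hβg ht.1]

end InnerProductSpace

theorem stmt_7 {n : ℕ} (p g : EuclideanSpace ℝ (Fin n))
    (w α β M c : ℝ) (hα : 0 ≤ α) (hβ : 0 ≤ β) (hM : 0 < M)
    (hc : c ∈ Set.Ioo (0 : ℝ) (1 / 2))
    (hw : w = ‖p‖ ^ 2 + 2 * α)
    (hβg : β + ⟪p, g⟫ ≤ c * w)
    (hbound : max (max ‖p‖ ‖g‖) (Real.sqrt α) ≤ M)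
    (Q : ℝ → ℝ)
    (hQ : ∀ lam, Q lam = ‖lam • g + (1 - lam) • p‖ ^ 2 + 2 * (lam * β + (1 - lam) * α))
    (b : ℝ) (hb : b = (1 - 2 * c) / (4 * M)) :
    ∃ lam ∈ Set.Icc (0 : ℝ) 1, Q lam ≤ w - w ^ 2 * b ^ 2 :=
  stmt_7_general p g w α β M c hα hM ⟨by linarith [hc.1], hc.2.le⟩ hw hβg hbound Q hQ b hb
end
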